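/- arXiv:1808.07144 — 7 statements merged into one kernel-verified Lean document; each statement's English description precedes it below -/
import Mathlib

section
/- For all a = (a₁,…,a₇) and x = (x₁,…,x₇) in ℝ⁷, the matrix product a(a)·a(x) equals a(m(a,x)), where m(a,x) = (x₁+a₁, x₂+a₂, x₃+a₃, x₄+a₂x₁+a₄, x₅+a₃x₁+a₅, x₆−(1/2)a₂x₁²−a₁x₄−a₁a₂x₁+a₆, x₇−(1/2)a₃x₁²−a₁x₅−a₁a₃x₁+a₇). -/
noncomputable section

open Matrix

/-- The upper-left 6×6 block `A₁(x)`. Coordinates: `x 0 = x₁`, ..., `x 6 = x₇`. -/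
def A1 (x : Fin 7 → ℝ) : Matrix (Fin 6) (Fin 6) ℝ :=
  !![1, -x 1, x 0, x 3, -(x 0 * x 1), x 5;
     0, 1, 0, -x 0, x 0, x 0 ^ 2 / 2;
     0, 0, 1, 0, -x 1, -x 3;
     0, 0, 0, 1, 0, 0;
     0, 0, 0, 0, 1, x 0;
     0, 0, 0, 0, 0, 1]

/-- The lower-right 6×6 block `A₂(x)`, obtained from `A₁(x)` by replacing
`x₂, x₄, x₆` with `x₃, x₅, x₇`. -/
def A2 (x : Fin 7 → ℝ) : Matrix (Fin 6) (Fin 6) ℝ :=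
  !![1, -x 2, x 0, x 4, -(x 0 * x 2), x 6;
     0, 1, 0, -x 0, x 0, x 0 ^ 2 / 2;
     0, 0, 1, 0, -x 2, -x 4;
     0, 0, 0, 1, 0, 0;
     0, 0, 0, 0, 1, x 0;
     0, 0, 0, 0, 0, 1]

/-- The block-diagonal 12×12 matrix `a(x) = diag(A₁(x), A₂(x))`. -/
def aMat (x : Fin 7 → ℝ) : Matrix (Fin 6 ⊕ Fin 6) (Fin 6 ⊕ Fin 6) ℝ :=
  Matrix.fromBlocks (A1 x) 0 0 (A2 x)

/-- The multiplication law `m(a, x)` on `ℝ⁷`. -/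
def m (a x : Fin 7 → ℝ) : Fin 7 → ℝ :=
  ![x 0 + a 0, x 1 + a 1, x 2 + a 2,
    x 3 + a 1 * x 0 + a 3,
    x 4 + a 2 * x 0 + a 4,
    x 5 - (1/2) * a 1 * x 0 ^ 2 - a 0 * x 3 - a 0 * a 1 * x 0 + a 5,
    x 6 - (1/2) * a 2 * x 0 ^ 2 - a 0 * x 4 - a 0 * a 2 * x 0 + a 6]

theorem A1_mul (a x : Fin 7 → ℝ) : A1 a * A1 x = A1 (m a x) := by
  ext i j
  fin_cases i <;> fin_cases j <;>
    simp [A1, m, Matrix.mul_apply, Fin.sum_univ_succ] <;> ring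

theorem A2_mul (a x : Fin 7 → ℝ) : A2 a * A2 x = A2 (m a x) := by
  ext i j
  fin_cases i <;> fin_cases j <;>
    simp [A2, m, Matrix.mul_apply, Fin.sum_univ_succ] <;> ring

/-- For all `a, x ∈ ℝ⁷`, the matrix product `a(a) · a(x)` equals `a(m(a,x))`. -/
theorem stmt_0 (a x : Fin 7 → ℝ) : aMat a * aMat x = aMat (m a x) := by
  simp [aMat, Matrix.fromBlocks_multiply, A1_mul, A2_mul]

end
end

section
/- Conjugation by j maps the subgroup Γ onto itself: ρ(Γ) = Γ, where ρ(g) = j g j⁻¹. -/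
noncomputable section

open Matrix

/-- The set `G = {a(x) : x ∈ ℝ⁷}` of matrices. -/
def GSet : Set (Matrix (Fin 6 ⊕ Fin 6) (Fin 6 ⊕ Fin 6) ℝ) :=
  {A | ∃ x : Fin 7 → ℝ, A = aMat x}
/-- The block-diagonal matrix `j = diag(J₁, J₂)` with `J₁ = diag(1,−1,−1,1,1,−1)` and
`J₂ = diag(1,1,−1,−1,−1,1)`. -/
def jMat : Matrix (Fin 6 ⊕ Fin 6) (Fin 6 ⊕ Fin 6) ℝ :=
  Matrix.fromBlocks (Matrix.diagonal ![1, -1, -1, 1, 1, -1]) 0 0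
    (Matrix.diagonal ![1, 1, -1, -1, -1, 1])
/-- The set `Γ = {a(x) : x₁ ∈ 2ℤ, x₂,…,x₇ ∈ ℤ}`. -/
def GammaSet : Set (Matrix (Fin 6 ⊕ Fin 6) (Fin 6 ⊕ Fin 6) ℝ) :=
  {A | ∃ x : Fin 7 → ℝ, A = aMat x ∧ (∃ k : ℤ, x 0 = 2 * k) ∧
        ∀ i : Fin 7, i ≠ 0 → ∃ k : ℤ, x i = k}

/-- The coordinates of `j a(x) j⁻¹`. -/
def flipVec (x : Fin 7 → ℝ) : Fin 7 → ℝ :=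
  ![-x 0, -x 1, x 2, x 3, -x 4, -x 5, x 6]

theorem flipVec_flipVec (x : Fin 7 → ℝ) : flipVec (flipVec x) = x := by
  ext i
  fin_cases i <;> simp [flipVec]

theorem jMat_mul_self : jMat * jMat = 1 := by
  rw [jMat, Matrix.fromBlocks_multiply, ← Matrix.fromBlocks_one]
  simp only [Matrix.diagonal_mul_diagonal, Matrix.mul_zero, Matrix.zero_mul, add_zero, zero_add]
  congr 1
  all_goals
    rw [← Matrix.diagonal_one]
    congr 1
    ext i
    fin_cases i <;> simp

theorem jMat_inv : jMat⁻¹ = jMat := Matrix.inv_eq_left_inv jMat_mul_self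

theorem conj_aMat (x : Fin 7 → ℝ) : jMat * aMat x * jMat⁻¹ = aMat (flipVec x) := by
  rw [jMat_inv, jMat, aMat, aMat, Matrix.fromBlocks_multiply, Matrix.fromBlocks_multiply]
  simp only [Matrix.mul_zero, Matrix.zero_mul, add_zero, zero_add]
  congr 1
  all_goals
    ext i k
    rw [Matrix.mul_diagonal, Matrix.diagonal_mul]
    fin_cases i <;> fin_cases k <;> simp [A1, A2, flipVec]

theorem conj_mem {A : Matrix (Fin 6 ⊕ Fin 6) (Fin 6 ⊕ Fin 6) ℝ} (hA : A ∈ GammaSet) :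
    jMat * A * jMat⁻¹ ∈ GammaSet := by
  obtain ⟨x, rfl, ⟨k, hk⟩, hx⟩ := hA
  refine ⟨flipVec x, conj_aMat x, ⟨-k, by simp [flipVec, hk]⟩, ?_⟩
  intro i hi
  obtain ⟨m, hm⟩ := hx i hi
  have h : flipVec x i = x i ∨ flipVec x i = -x i := by
    fin_cases i <;> simp [flipVec]
  rcases h with h | h
  · exact ⟨m, by rw [h, hm]⟩
  · exact ⟨-m, by rw [h, hm]; push_cast; rfl⟩

/-- Conjugation by `j` maps the subgroup `Γ` onto itself: `ρ(Γ) = Γ`,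
where `ρ(g) = j g j⁻¹`. -/
theorem stmt_5 :
    (fun A : Matrix (Fin 6 ⊕ Fin 6) (Fin 6 ⊕ Fin 6) ℝ => jMat * A * jMat⁻¹) '' GammaSet
      = GammaSet := by
  ext A
  constructor
  · rintro ⟨B, hB, rfl⟩
    exact conj_mem hB
  · intro hA
    refine ⟨jMat * A * jMat⁻¹, conj_mem hA, ?_⟩
    obtain ⟨x, rfl, -⟩ := hA
    simp only [conj_aMat, flipVec_flipVec]

end
end

section
/- Let c = a(0,0,0,0,0,1/2,0) and define σ : G → G by σ(g) = c·ρ(g), where ρ(g) = j g j⁻¹. Then: (i) c commutes with every element of G; (ii) σ(σ(g)) = g for all g ∈ G; (iii) A·σ(g) = σ(ρ(A)·g) for all A, g ∈ G; and (iv) σ(a(x)) = a(−x₁, −x₂, x₃, x₄, −x₅, 1/2−x₆, x₇) for every x ∈ ℝ⁷. -/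
noncomputable section

open Matrix

/-- `c = a(0,0,0,0,0,1/2,0)`. -/
def cMat : Matrix (Fin 6 ⊕ Fin 6) (Fin 6 ⊕ Fin 6) ℝ :=
  aMat ![0, 0, 0, 0, 0, 1/2, 0]

/-- The automorphism `ρ(g) = j g j⁻¹`. -/
def rho (A : Matrix (Fin 6 ⊕ Fin 6) (Fin 6 ⊕ Fin 6) ℝ) :
    Matrix (Fin 6 ⊕ Fin 6) (Fin 6 ⊕ Fin 6) ℝ :=
  jMat * A * jMat⁻¹

/-- The involution `σ(g) = c · ρ(g)`. -/
def sigma (A : Matrix (Fin 6 ⊕ Fin 6) (Fin 6 ⊕ Fin 6) ℝ) :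
    Matrix (Fin 6 ⊕ Fin 6) (Fin 6 ⊕ Fin 6) ℝ :=
  cMat * rho A

theorem rho_eq (A : Matrix (Fin 6 ⊕ Fin 6) (Fin 6 ⊕ Fin 6) ℝ) : rho A = jMat * A * jMat := by
  rw [rho, jMat_inv]

theorem rho_mul (A B : Matrix (Fin 6 ⊕ Fin 6) (Fin 6 ⊕ Fin 6) ℝ) :
    rho (A * B) = rho A * rho B := by
  simp only [rho_eq]
  calc jMat * (A * B) * jMat = jMat * A * 1 * B * jMat := by simp only [Matrix.mul_one, Matrix.mul_assoc]
    _ = _ := by rw [← jMat_mul_self]; simp only [Matrix.mul_assoc]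

theorem rho_rho (A : Matrix (Fin 6 ⊕ Fin 6) (Fin 6 ⊕ Fin 6) ℝ) : rho (rho A) = A := by
  simp only [rho_eq]
  calc jMat * (jMat * A * jMat) * jMat = (jMat * jMat) * A * (jMat * jMat) := by
        simp only [Matrix.mul_assoc]
    _ = A := by rw [jMat_mul_self, Matrix.one_mul, Matrix.mul_one]

theorem rho_aMat (x : Fin 7 → ℝ) :
    rho (aMat x) = aMat ![-x 0, -x 1, x 2, x 3, -x 4, -x 5, x 6] := by
  rw [rho_eq, jMat, aMat, aMat, Matrix.fromBlocks_multiply, Matrix.fromBlocks_multiply]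
  simp only [Matrix.mul_zero, Matrix.zero_mul, add_zero, zero_add]
  congr 1
  · ext i k
    rw [Matrix.mul_diagonal, Matrix.diagonal_mul]
    fin_cases i <;> fin_cases k <;> simp [A1]
  · ext i k
    rw [Matrix.mul_diagonal, Matrix.diagonal_mul]
    fin_cases i <;> fin_cases k <;> simp [A2]

theorem cMat_mul (x : Fin 7 → ℝ) :
    cMat * aMat x = aMat ![x 0, x 1, x 2, x 3, x 4, 1/2 + x 5, x 6] := by
  rw [cMat, aMat, aMat, aMat, Matrix.fromBlocks_multiply]
  simp only [Matrix.mul_zero, Matrix.zero_mul, add_zero, zero_add]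
  congr 1
  · ext i k
    fin_cases i <;> fin_cases k <;> simp [A1, Matrix.mul_apply, Fin.sum_univ_succ, add_comm]
  · ext i k
    fin_cases i <;> fin_cases k <;> simp [A2, Matrix.mul_apply, Fin.sum_univ_succ]

theorem mul_cMat (x : Fin 7 → ℝ) :
    aMat x * cMat = aMat ![x 0, x 1, x 2, x 3, x 4, 1/2 + x 5, x 6] := by
  rw [cMat, aMat, aMat, aMat, Matrix.fromBlocks_multiply]
  simp only [Matrix.mul_zero, Matrix.zero_mul, add_zero, zero_add]
  congr 1
  · ext i k
    fin_cases i <;> fin_cases k <;> simp [A1, Matrix.mul_apply, Fin.sum_univ_succ]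
  · ext i k
    fin_cases i <;> fin_cases k <;> simp [A2, Matrix.mul_apply, Fin.sum_univ_succ]

theorem sigma_aMat (x : Fin 7 → ℝ) :
    sigma (aMat x) = aMat ![-x 0, -x 1, x 2, x 3, -x 4, 1/2 - x 5, x 6] := by
  rw [sigma, rho_aMat, cMat_mul]
  congr 1

/-- (i) `c` commutes with every element of `G`; (ii) `σ ∘ σ = id` on `G`;
(iii) `A · σ(g) = σ(ρ(A) · g)` for all `A, g ∈ G`; and
(iv) `σ(a(x)) = a(−x₁, −x₂, x₃, x₄, −x₅, 1/2 − x₆, x₇)` for every `x ∈ ℝ⁷`. -/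
theorem stmt_6 :
    (∀ A ∈ GSet, cMat * A = A * cMat) ∧
    (∀ g ∈ GSet, sigma (sigma g) = g) ∧
    (∀ A ∈ GSet, ∀ g ∈ GSet, A * sigma g = sigma (rho A * g)) ∧
    (∀ x : Fin 7 → ℝ,
      sigma (aMat x) = aMat ![-x 0, -x 1, x 2, x 3, -x 4, 1/2 - x 5, x 6]) := by
  refine ⟨?_, ?_, ?_, sigma_aMat⟩
  · rintro A ⟨x, rfl⟩
    rw [cMat_mul, mul_cMat]
  · rintro g ⟨x, rfl⟩
    rw [sigma_aMat, sigma_aMat]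
    congr 1
    ext i
    fin_cases i <;> simp
  · rintro A ⟨x, rfl⟩ g -
    rw [sigma, sigma, rho_mul, rho_rho, ← Matrix.mul_assoc, ← Matrix.mul_assoc, cMat_mul, mul_cMat]

end
end

section
/- Let D = 2ℤ × ℤ⁶ ⊂ ℝ⁷ act on ℝ⁷ by a·x = m(a,x) (this is a group action, since m is the coordinate expression of left multiplication in a nilpotent Lie group), and let M be the quotient topological space ℝ⁷/D. Let T⁶ = ℝ⁶/ℤ⁶ and let ν : T⁶ → T⁶ be the homeomorphism induced by the linear map E (which maps ℤ⁶ onto ℤ⁶). Let N be the quotient of ℝ × T⁶ by the ℤ-action generated by the homeomorphism (t, y) ↦ (t+2, ν(y)). Then M is homeomorphic to N; that is, M is the mapping torus of the 6-torus diffeomorphism ν. -/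
noncomputable section

open Matrix

/-- The relation on `ℝ⁷` identifying `x` with `a · x = m(a,x)` for
`a ∈ D = 2ℤ × ℤ⁶`. -/
def relM (x y : Fin 7 → ℝ) : Prop :=
  ∃ a : Fin 7 → ℝ, (∃ k : ℤ, a 0 = 2 * k) ∧ (∀ i : Fin 7, i ≠ 0 → ∃ k : ℤ, a i = k) ∧
    m a x = y

/-- The quotient space `M = ℝ⁷ / D` (with the quotient topology). -/
def Mspace := Quot relM

instance : TopologicalSpace Mspace :=
  inferInstanceAs (TopologicalSpace (Quot relM))

/-- The relation on `ℝ⁶` identifying `x` with `x + k` for `k ∈ ℤ⁶`. -/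
def relT (x y : Fin 6 → ℝ) : Prop :=
  ∃ k : Fin 6 → ℤ, y = x + fun i => (k i : ℝ)

/-- The 6-torus `T⁶ = ℝ⁶ / ℤ⁶` (with the quotient topology). -/
def T6 := Quot relT

instance : TopologicalSpace T6 :=
  inferInstanceAs (TopologicalSpace (Quot relT))

/-- The 6×6 integer matrix `E` (acting on the coordinates `(x₂,…,x₇)`). -/
def Ez : Matrix (Fin 6) (Fin 6) ℤ :=
  !![1, 0, 0, 0, 0, 0;
     0, 1, 0, 0, 0, 0;
     -2, 0, 1, 0, 0, 0;
     0, -2, 0, 1, 0, 0;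
     2, 0, -2, 0, 1, 0;
     0, 2, 0, -2, 0, 1]

/-- `E` as a real matrix. -/
def Emat : Matrix (Fin 6) (Fin 6) ℝ := Ez.map fun k => (k : ℝ)

/-- The relation on `ℝ × T⁶` generating the ℤ-action `(t, y) ↦ (t + 2, ν(y))`;
the quotient `Quot (relN ν)` (by the equivalence relation it generates) is the
mapping torus `N` of `ν`. -/
def relN (nu : T6 → T6) (p q : ℝ × T6) : Prop :=
  q = (p.1 + 2, nu p.2)

instance (nu : T6 → T6) : TopologicalSpace (Quot (relN nu)) :=
  inferInstanceAs (TopologicalSpace (Quot (relN nu)))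

/-- The linear flow on `ℝ⁶` whose time-two map is `E`. -/
def flowA (s : ℝ) (y : Fin 6 → ℝ) : Fin 6 → ℝ :=
  ![y 0, y 1, y 2 - s * y 0, y 3 - s * y 1,
    y 4 - s * y 2 + s ^ 2 / 2 * y 0, y 5 - s * y 3 + s ^ 2 / 2 * y 1]

/-- Straightening of the fibre coordinates. -/
def fib (x : Fin 7 → ℝ) : Fin 6 → ℝ :=
  ![x 1, x 2, x 3 - x 0 * x 1, x 4 - x 0 * x 2,
    x 5 + x 0 ^ 2 / 2 * x 1, x 6 + x 0 ^ 2 / 2 * x 2]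

/-- Inverse of the straightening. -/
def unfib (t : ℝ) (y : Fin 6 → ℝ) : Fin 7 → ℝ :=
  ![t, y 0, y 1, y 2 + t * y 0, y 3 + t * y 1,
    y 4 - t ^ 2 / 2 * y 0, y 5 - t ^ 2 / 2 * y 1]

lemma emat_eq (y : Fin 6 → ℝ) : Emat.mulVec y = flowA 2 y := by
  ext i
  fin_cases i <;>
    simp [Emat, Ez, flowA, Matrix.mulVec, dotProduct, Fin.sum_univ_succ] <;> ring

lemma flowA_add (s u : ℝ) (y : Fin 6 → ℝ) : flowA s (flowA u y) = flowA (u + s) y := by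
  ext i
  fin_cases i <;> simp [flowA] <;> ring

lemma flowA_zero (y : Fin 6 → ℝ) : flowA 0 y = y := by
  ext i
  fin_cases i <;> simp [flowA]

lemma unfib_fib (x : Fin 7 → ℝ) : unfib (x 0) (fib x) = x := by
  ext i
  fin_cases i <;> simp [unfib, fib]

lemma fib_unfib (t : ℝ) (y : Fin 6 → ℝ) : fib (unfib t y) = y := by
  ext i
  fin_cases i <;> simp [unfib, fib]

/-- The projection `ℝ × ℝ⁶ → N`. -/
def qN (nu : T6 → T6) (t : ℝ) (y : Fin 6 → ℝ) : Quot (relN nu) :=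
  Quot.mk _ (t, Quot.mk relT y)

lemma qN_trans (nu : T6 → T6) (t : ℝ) (y : Fin 6 → ℝ) (k : Fin 6 → ℤ) :
    qN nu t (y + fun i => (k i : ℝ)) = qN nu t y := by
  have h : (Quot.mk relT y) = Quot.mk relT (y + fun i => (k i : ℝ)) := Quot.sound ⟨k, rfl⟩
  unfold qN
  rw [h]

lemma qN_step (nu : T6 → T6)
    (hnu : ∀ y : Fin 6 → ℝ, nu (Quot.mk relT y) = Quot.mk relT (Emat.mulVec y))
    (t : ℝ) (y : Fin 6 → ℝ) : qN nu (t + 2) (flowA 2 y) = qN nu t y := by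
  symm
  apply Quot.sound
  simp only [relN, hnu, emat_eq]

lemma qN_flow (nu : T6 → T6)
    (hnu : ∀ y : Fin 6 → ℝ, nu (Quot.mk relT y) = Quot.mk relT (Emat.mulVec y))
    (t : ℝ) (y : Fin 6 → ℝ) (k : ℤ) :
    qN nu (t + 2 * k) (flowA (2 * k) y) = qN nu t y := by
  induction k using Int.induction_on with
  | zero => simp [flowA_zero]
  | succ n ih =>
    rw [← ih, ← qN_step nu hnu (t + 2 * ((n : ℤ) : ℝ)), flowA_add]
    push_cast
    congr 1 <;> ring_nf
  | pred n ih =>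
    rw [← ih, ← qN_step nu hnu (t + 2 * ((-(n : ℤ) - 1 : ℤ) : ℝ)), flowA_add]
    push_cast
    congr 1 <;> ring_nf

lemma qN_relM (nu : T6 → T6)
    (hnu : ∀ y : Fin 6 → ℝ, nu (Quot.mk relT y) = Quot.mk relT (Emat.mulVec y))
    (x x' : Fin 7 → ℝ) (h : relM x x') : qN nu (x 0) (fib x) = qN nu (x' 0) (fib x') := by
  obtain ⟨a, ⟨k, hk⟩, ha, rfl⟩ := h
  obtain ⟨k1, h1⟩ := ha 1 (by decide)
  obtain ⟨k2, h2⟩ := ha 2 (by decide)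
  obtain ⟨k3, h3⟩ := ha 3 (by decide)
  obtain ⟨k4, h4⟩ := ha 4 (by decide)
  obtain ⟨k5, h5⟩ := ha 5 (by decide)
  obtain ⟨k6, h6⟩ := ha 6 (by decide)
  rw [← qN_flow nu hnu (x 0) (fib x) k, ← qN_trans nu _ _
    ![k1, k2, k3 - 2 * k * k1, k4 - 2 * k * k2, k5 + 2 * k ^ 2 * k1, k6 + 2 * k ^ 2 * k2]]
  congr 1
  · simp [m, hk]
  · ext i
    fin_cases i <;> simp [m, fib, flowA, hk, h1, h2, h3, h4, h5, h6] <;> ring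

/-- The projection `ℝ × ℝ⁶ → M`. -/
def qM (t : ℝ) (y : Fin 6 → ℝ) : Mspace := Quot.mk relM (unfib t y)

lemma qM_relT (t : ℝ) (y y' : Fin 6 → ℝ) (h : relT y y') : qM t y = qM t y' := by
  obtain ⟨k, rfl⟩ := h
  apply Quot.sound
  refine ⟨![0, k 0, k 1, k 2, k 3, k 4, k 5], ⟨0, by simp⟩, ?_, ?_⟩
  · intro i hi
    fin_cases i
    · exact absurd rfl hi
    all_goals exact ⟨_, rfl⟩
  · ext i
    fin_cases i <;> simp [m, unfib] <;> ring

lemma qM_step (t : ℝ) (y : Fin 6 → ℝ) : qM t y = qM (t + 2) (flowA 2 y) := by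
  apply Quot.sound
  refine ⟨![2, 0, 0, 0, 0, 0, 0], ⟨1, by simp⟩, ?_, ?_⟩
  · intro i hi
    fin_cases i
    · exact absurd rfl hi
    all_goals exact ⟨0, by simp⟩
  · ext i
    fin_cases i <;> simp [m, unfib, flowA] <;> ring

/-- The map `ℝ × T⁶ → M`. -/
def backT (p : ℝ × T6) : Mspace := Quot.lift (qM p.1) (qM_relT p.1) p.2

lemma continuous_backT : Continuous backT := by
  have hq : Topology.IsQuotientMap (Quot.mk relT : (Fin 6 → ℝ) → T6) := isQuotientMap_quot_mk
  refine hq.continuous_lift_prod_right (g := backT) ?_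
  have h1 : Continuous (fun p : ℝ × (Fin 6 → ℝ) => unfib p.1 p.2) := by
    unfold unfib
    fun_prop
  have h2 : Continuous (Quot.mk relM : (Fin 7 → ℝ) → Mspace) := continuous_quot_mk
  exact h2.comp h1

lemma backT_relN (nu : T6 → T6)
    (hnu : ∀ y : Fin 6 → ℝ, nu (Quot.mk relT y) = Quot.mk relT (Emat.mulVec y))
    (p q : ℝ × T6) (h : relN nu p q) : backT p = backT q := by
  obtain ⟨t, z⟩ := p
  unfold relN at h
  subst h
  induction z using Quot.ind with
  | mk y =>
    simp only [hnu, emat_eq]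
    exact qM_step t y

/-- The map `M → N`. -/
def fwd (nu : T6 → T6)
    (hnu : ∀ y : Fin 6 → ℝ, nu (Quot.mk relT y) = Quot.mk relT (Emat.mulVec y)) :
    Mspace → Quot (relN nu) :=
  Quot.lift (fun x => qN nu (x 0) (fib x)) (qN_relM nu hnu)

/-- The map `N → M`. -/
def bwd (nu : T6 → T6)
    (hnu : ∀ y : Fin 6 → ℝ, nu (Quot.mk relT y) = Quot.mk relT (Emat.mulVec y)) :
    Quot (relN nu) → Mspace :=
  Quot.lift backT (backT_relN nu hnu)

lemma continuous_fwd (nu : T6 → T6)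
    (hnu : ∀ y : Fin 6 → ℝ, nu (Quot.mk relT y) = Quot.mk relT (Emat.mulVec y)) :
    Continuous (fwd nu hnu) := by
  have h1 : Continuous fib := by
    unfold fib
    fun_prop
  have h2 : Continuous (Quot.mk relT : (Fin 6 → ℝ) → T6) := continuous_quot_mk
  have h3 : Continuous (Quot.mk (relN nu)) := continuous_quot_mk
  have h4 : Continuous (fun x : Fin 7 → ℝ => qN nu (x 0) (fib x)) :=
    h3.comp ((continuous_apply 0).prodMk (h2.comp h1))
  exact continuous_quot_lift (qN_relM nu hnu) h4

/-- `M = ℝ⁷/D` is homeomorphic to the mapping torus of the 6-torus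
homeomorphism `ν` induced by the linear map `E`. -/
theorem stmt_8 (nu : T6 → T6) (hcont : Continuous nu)
    (hnu : ∀ y : Fin 6 → ℝ, nu (Quot.mk relT y) = Quot.mk relT (Emat.mulVec y)) :
    Nonempty (Mspace ≃ₜ Quot (relN nu)) := by
  refine ⟨⟨⟨fwd nu hnu, bwd nu hnu, ?_, ?_⟩, continuous_fwd nu hnu,
    continuous_quot_lift (backT_relN nu hnu) continuous_backT⟩⟩
  · intro z
    induction z using Quot.ind with
    | mk x => exact congrArg (Quot.mk relM) (unfib_fib x)
  · intro z
    induction z using Quot.ind with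
    | mk p =>
      obtain ⟨t, w⟩ := p
      induction w using Quot.ind with
      | mk y =>
        change qN nu t (fib (unfib t y)) = qN nu t y
        rw [fib_unfib]

end
end

section
/- Let v₁, v₂, v₅, v₆ : ℝ³ → ℝ be smooth functions, each periodic with period 1 in each of the three variables x₃, x₄, x₇ (write ∂ₖ for the partial derivative in the variable xₖ). Then the following are equivalent: (a) on all of ℝ³ the system −∂₃v₂ + ∂₄v₅ − ∂₇v₆ = 0, ∂₃v₁ − v₁ − ∂₇v₅ − ∂₄v₆ = 0, −∂₄v₁ + ∂₇v₂ − ∂₃v₆ = 0, ∂₇v₁ + v₁ + ∂₄v₂ + ∂₃v₅ = 0 holds; (b) v₁ is identically zero and v₂, v₅, v₆ are constant functions. In particular, the space of solutions of this system is a 3-dimensional real vector space. -/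
noncomputable section

/-- The partial derivative of `f : ℝ³ → ℝ` in the `k`-th coordinate direction.
The three coordinates correspond to the variables `x₃, x₄, x₇`:
`pd 0 = ∂₃`, `pd 1 = ∂₄`, `pd 2 = ∂₇`. -/
def pd (k : Fin 3) (f : (Fin 3 → ℝ) → ℝ) (x : Fin 3 → ℝ) : ℝ :=
  fderiv ℝ f x (Pi.single k 1)

/-- `f` is periodic with period 1 in each of the three variables. -/
def Periodic3 (f : (Fin 3 → ℝ) → ℝ) : Prop :=
  ∀ k : Fin 3, ∀ x : Fin 3 → ℝ, f (x + Pi.single k 1) = f x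

lemma smooth_pd {f : (Fin 3 → ℝ) → ℝ} (hf : ContDiff ℝ (⊤ : ℕ∞) f) (k : Fin 3) :
    ContDiff ℝ (⊤ : ℕ∞) (pd k f) :=
  (hf.fderiv_right (m := (⊤ : ℕ∞)) (by exact le_rfl)).clm_apply contDiff_const

lemma smooth_diff {f : (Fin 3 → ℝ) → ℝ} (hf : ContDiff ℝ (⊤ : ℕ∞) f) : Differentiable ℝ f :=
  hf.differentiable (by simp)

lemma periodic_pd {f : (Fin 3 → ℝ) → ℝ} (hf : Periodic3 f) (k : Fin 3) :
    Periodic3 (pd k f) := by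
  intro j x
  unfold pd
  rw [← fderiv_comp_add_right]
  congr 2
  funext y
  exact hf j y

lemma pd_comm {f : (Fin 3 → ℝ) → ℝ} (hf : ContDiff ℝ (⊤ : ℕ∞) f) (j k : Fin 3)
    (x : Fin 3 → ℝ) : pd j (pd k f) x = pd k (pd j f) x := by
  have hd : DifferentiableAt ℝ (fderiv ℝ f) x :=
    (hf.fderiv_right (m := (⊤ : ℕ∞)) (by exact le_rfl)).differentiable (by simp) x
  have key : ∀ j k : Fin 3, pd j (pd k f) x
      = fderiv ℝ (fderiv ℝ f) x (Pi.single j 1) (Pi.single k 1) := by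
    intro j k
    unfold pd
    rw [fderiv_clm_apply hd (differentiableAt_const _)]
    simp
  rw [key, key]
  have := (hf.contDiffAt (x := x)).isSymmSndFDerivAt
    (by simp only [minSmoothness_of_isRCLikeNormedField]; exact WithTop.coe_le_coe.2 le_top)
  exact this _ _

lemma pd_add {f g : (Fin 3 → ℝ) → ℝ} (hf : Differentiable ℝ f) (hg : Differentiable ℝ g)
    (k : Fin 3) (x : Fin 3 → ℝ) : pd k (fun y => f y + g y) x = pd k f x + pd k g x := by
  unfold pd
  rw [fderiv_fun_add (hf x) (hg x)]
  rfl

lemma pd_sub {f g : (Fin 3 → ℝ) → ℝ} (hf : Differentiable ℝ f) (hg : Differentiable ℝ g)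
    (k : Fin 3) (x : Fin 3 → ℝ) : pd k (fun y => f y - g y) x = pd k f x - pd k g x := by
  unfold pd
  rw [fderiv_fun_sub (hf x) (hg x)]
  rfl

lemma pd_neg {f : (Fin 3 → ℝ) → ℝ} 
    (k : Fin 3) (x : Fin 3 → ℝ) : pd k (fun y => - f y) x = - pd k f x := by
  unfold pd
  rw [fderiv_fun_neg]
  rfl

lemma pd_mul {f g : (Fin 3 → ℝ) → ℝ} (hf : Differentiable ℝ f) (hg : Differentiable ℝ g)
    (k : Fin 3) (x : Fin 3 → ℝ) :
    pd k (fun y => f y * g y) x = f x * pd k g x + g x * pd k f x := by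
  unfold pd
  rw [fderiv_fun_mul (hf x) (hg x)]
  simp

lemma pd_const (c : ℝ) (k : Fin 3) (x : Fin 3 → ℝ) : pd k (fun _ => c) x = 0 := by
  unfold pd
  simp

/-- A periodic vector field with nonnegative divergence is divergence free. -/
lemma div_zero_of_nonneg (F : Fin 3 → (Fin 3 → ℝ) → ℝ)
    (hF : ∀ k, ContDiff ℝ (⊤ : ℕ∞) (F k)) (hp : ∀ k, Periodic3 (F k))
    (h : ∀ x, 0 ≤ ∑ k, pd k (F k) x) (x : Fin 3 → ℝ) : ∑ k, pd k (F k) x = 0 := by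
  have hc : Continuous (fun x => ∑ k, pd k (F k) x) :=
    continuous_finsetSum _ fun k _ => (smooth_pd (hF k) k).continuous
  set a : Fin 3 → ℝ := fun i => x i - 1 / 2 with ha
  set b : Fin 3 → ℝ := fun i => a i + 1 with hb
  have hi : MeasureTheory.IntegrableOn (fun x => ∑ k, pd k (F k) x) (Set.Icc a b) :=
    hc.continuousOn.integrableOn_compact isCompact_Icc
  have hint := MeasureTheory.integral_divergence_of_hasFDerivAt_off_countable' a b
    (fun i => by simp [hb]) F (fun k x => fderiv ℝ (F k) x) ∅ Set.countable_empty
    (fun k => (hF k).continuous.continuousOn)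
    (fun y _ k => (smooth_diff (hF k) y).hasFDerivAt) hi
  have hface : ∀ (i : Fin 3) (y : Fin 2 → ℝ),
      F i (Fin.insertNth i (b i) y) = F i (Fin.insertNth i (a i) y) := by
    intro i y
    rw [← hp i i (Fin.insertNth i (a i) y)]
    congr 1
    funext j
    refine Fin.succAboveCases i ?_ (fun j => ?_) j
    · simp [hb]
    · simp
  simp only [hface, sub_self, Finset.sum_const_zero] at hint
  have hae := (MeasureTheory.setIntegral_eq_zero_iff_of_nonneg_ae
    (Filter.Eventually.of_forall h) hi).1 hint
  have hU : IsOpen (Set.pi Set.univ fun i => Set.Ioo (a i) (b i)) :=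
    isOpen_set_pi Set.finite_univ fun i _ => isOpen_Ioo
  have hsub : (Set.pi Set.univ fun i => Set.Ioo (a i) (b i)) ⊆ Set.Icc a b :=
    fun y hy => ⟨fun i => (hy i trivial).1.le, fun i => (hy i trivial).2.le⟩
  have := MeasureTheory.Measure.eqOn_open_of_ae_eq
    (MeasureTheory.ae_restrict_of_ae_restrict_of_subset hsub hae) hU hc.continuousOn
    continuousOn_const
  refine this fun i _ => ⟨?_, ?_⟩
  · simp only [ha]; linarith
  · simp only [hb, ha]; linarith

/-- Periodic solutions of `Δf + a·∇f = 0` are constant. -/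
lemma const_of_elliptic (a : Fin 3 → ℝ) {f : (Fin 3 → ℝ) → ℝ} (hf : ContDiff ℝ (⊤ : ℕ∞) f)
    (hp : Periodic3 f) (h : ∀ x, ∑ k, (pd k (pd k f) x + a k * pd k f x) = 0) :
    ∃ c, ∀ x, f x = c := by
  have hd := smooth_diff hf
  have hdiv : ∀ x, ∑ k, pd k (fun y => f y * (pd k f y + a k / 2 * f y)) x
      = ∑ k, pd k f x ^ 2 := by
    intro x
    have e : ∀ k, pd k (fun y => f y * (pd k f y + a k / 2 * f y)) x
        = f x * (pd k (pd k f) x + a k * pd k f x) + pd k f x ^ 2 := by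
      intro k
      have hk := smooth_diff (smooth_pd hf k)
      have hc : Differentiable ℝ (fun y => a k / 2 * f y) := hd.const_mul _
      rw [pd_mul hd (hk.fun_add hc), pd_add hk hc, pd_mul (differentiable_const _) hd, pd_const]
      ring
    simp only [e]
    rw [Finset.sum_add_distrib, ← Finset.mul_sum, h]
    simp
  have hz := div_zero_of_nonneg (fun k y => f y * (pd k f y + a k / 2 * f y))
    (fun k => hf.mul ((smooth_pd hf k).add (contDiff_const.mul hf)))
    (fun k j x => by simp only [hp j x, periodic_pd hp k j x])
    (fun x => by rw [hdiv]; positivity)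
  refine ⟨f 0, fun x => is_const_of_fderiv_eq_zero hd (fun y => ?_) x 0⟩
  have hy := hz y
  rw [hdiv, Finset.sum_eq_zero_iff_of_nonneg (fun _ _ => sq_nonneg _)] at hy
  apply ContinuousLinearMap.coe_injective
  refine LinearMap.pi_ext' fun k => ?_
  ext
  simpa [pd] using hy k (Finset.mem_univ k)

/-- Let `v₁, v₂, v₅, v₆ : ℝ³ → ℝ` be smooth, periodic with period 1 in each of the
variables `x₃, x₄, x₇`. Then the system
`−∂₃v₂ + ∂₄v₅ − ∂₇v₆ = 0`, `∂₃v₁ − v₁ − ∂₇v₅ − ∂₄v₆ = 0`,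
`−∂₄v₁ + ∂₇v₂ − ∂₃v₆ = 0`, `∂₇v₁ + v₁ + ∂₄v₂ + ∂₃v₅ = 0`
holds on all of `ℝ³` if and only if `v₁ ≡ 0` and `v₂, v₅, v₆` are constant.
(In particular the solution space is 3-dimensional.) -/
theorem stmt_11 (v1 v2 v5 v6 : (Fin 3 → ℝ) → ℝ)
    (h1 : ContDiff ℝ (⊤ : ℕ∞) v1) (h2 : ContDiff ℝ (⊤ : ℕ∞) v2)
    (h5 : ContDiff ℝ (⊤ : ℕ∞) v5) (h6 : ContDiff ℝ (⊤ : ℕ∞) v6)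
    (p1 : Periodic3 v1) (p2 : Periodic3 v2) (p5 : Periodic3 v5) (p6 : Periodic3 v6) :
    (∀ x : Fin 3 → ℝ,
        -pd 0 v2 x + pd 1 v5 x - pd 2 v6 x = 0 ∧
        pd 0 v1 x - v1 x - pd 2 v5 x - pd 1 v6 x = 0 ∧
        -pd 1 v1 x + pd 2 v2 x - pd 0 v6 x = 0 ∧
        pd 2 v1 x + v1 x + pd 1 v2 x + pd 0 v5 x = 0) ↔
      ((∀ x, v1 x = 0) ∧ (∃ c, ∀ x, v2 x = c) ∧ (∃ c, ∀ x, v5 x = c) ∧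
        (∃ c, ∀ x, v6 x = c)) := by
  have d1 := smooth_diff h1
  have d2 := smooth_diff h2
  have d5 := smooth_diff h5
  have d6 := smooth_diff h6
  constructor
  · intro H
    have q1 := fun k => smooth_diff (smooth_pd h1 k)
    have q2 := fun k => smooth_diff (smooth_pd h2 k)
    have q5 := fun k => smooth_diff (smooth_pd h5 k)
    have q6 := fun k => smooth_diff (smooth_pd h6 k)
    have E1 : ∀ k x, -pd k (pd 0 v2) x + pd k (pd 1 v5) x - pd k (pd 2 v6) x = 0 := by
      intro k x
      have := pd_const 0 k x
      rw [← funext fun x => (H x).1, pd_sub (by fun_prop) (q6 2), pd_add (by fun_prop) (q5 1),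
        pd_neg] at this
      exact this
    have E2 : ∀ k x, pd k (pd 0 v1) x - pd k v1 x - pd k (pd 2 v5) x - pd k (pd 1 v6) x = 0 := by
      intro k x
      have := pd_const 0 k x
      rw [← funext fun x => (H x).2.1, pd_sub (by fun_prop) (q6 1), pd_sub (by fun_prop) (q5 2),
        pd_sub (q1 0) d1] at this
      exact this
    have E3 : ∀ k x, -pd k (pd 1 v1) x + pd k (pd 2 v2) x - pd k (pd 0 v6) x = 0 := by
      intro k x
      have := pd_const 0 k x
      rw [← funext fun x => (H x).2.2.1, pd_sub (by fun_prop) (q6 0),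
        pd_add (by fun_prop) (q2 2), pd_neg] at this
      exact this
    have E4 : ∀ k x, pd k (pd 2 v1) x + pd k v1 x + pd k (pd 1 v2) x + pd k (pd 0 v5) x = 0 := by
      intro k x
      have := pd_const 0 k x
      rw [← funext fun x => (H x).2.2.2, pd_add (by fun_prop) (q5 0),
        pd_add (by fun_prop) (q2 1), pd_add (q1 2) d1] at this
      exact this
    obtain ⟨c, hc⟩ := const_of_elliptic ![-1, 0, 1] h1 p1 (fun x => by
      simp [Fin.sum_univ_three]
      linarith [E2 0 x, E3 1 x, E4 2 x, pd_comm h5 0 2 x, pd_comm h6 0 1 x, pd_comm h2 1 2 x])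
    have hv : v1 = fun _ => c := funext hc
    have hk : ∀ k x, pd k v1 x = 0 := fun k x => by rw [hv, pd_const]
    have hk2 : ∀ j k x, pd j (pd k v1) x = 0 := fun j k x => by
      rw [show pd k v1 = fun _ => 0 from funext (hk k), pd_const]
    have hc0 : c = 0 := by
      have e : ∀ x, ∑ k, pd k (![fun _ => 0, v6, v5] k) x = -c := by
        intro x
        simp [Fin.sum_univ_three, pd_const]
        linarith [(H x).2.1, hk 0 x, hc x]
      have e' : ∀ x, ∑ k, pd k (![fun _ => 0, fun y => -v6 y, fun y => -v5 y] k) x = c := by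
        intro x
        simp [Fin.sum_univ_three, pd_const, pd_neg]
        linarith [(H x).2.1, hk 0 x, hc x]
      rcases le_total 0 c with h | h
      · rw [← e' 0]
        apply div_zero_of_nonneg
        · intro k; fin_cases k
          exacts [contDiff_const, h6.neg, h5.neg]
        · intro k; fin_cases k
          exacts [fun _ _ => rfl, fun k x => congrArg Neg.neg (p6 k x),
            fun k x => congrArg Neg.neg (p5 k x)]
        · intro x; rw [e']; exact h
      · rw [← neg_eq_zero, ← e 0]
        apply div_zero_of_nonneg
        · intro k; fin_cases k
          exacts [contDiff_const, h6, h5]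
        · intro k; fin_cases k
          exacts [fun _ _ => rfl, p6, p5]
        · intro x; rw [e]; linarith
    refine ⟨fun x => by rw [hc, hc0], ?_, ?_, ?_⟩
    · refine const_of_elliptic 0 h2 p2 fun x => ?_
      simp [Fin.sum_univ_three]
      linarith [E1 0 x, E3 2 x, E4 1 x, pd_comm h5 0 1 x, pd_comm h6 0 2 x,
        hk2 2 1 x, hk2 1 2 x, hk 1 x]
    · refine const_of_elliptic 0 h5 p5 fun x => ?_
      simp [Fin.sum_univ_three]
      linarith [E1 1 x, E2 2 x, E4 0 x, pd_comm h2 0 1 x, pd_comm h6 1 2 x,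
        hk2 2 0 x, hk2 0 2 x, hk 0 x, hk 2 x]
    · refine const_of_elliptic 0 h6 p6 fun x => ?_
      simp [Fin.sum_univ_three]
      linarith [E1 2 x, E2 1 x, E3 0 x, pd_comm h2 0 2 x, pd_comm h5 1 2 x,
        hk2 1 0 x, hk2 0 1 x, hk 1 x]
  · rintro ⟨H1, ⟨a, H2⟩, ⟨b, H5⟩, ⟨c, H6⟩⟩ x
    obtain rfl : v1 = fun _ => 0 := funext H1
    obtain rfl : v2 = fun _ => a := funext H2
    obtain rfl : v5 = fun _ => b := funext H5
    obtain rfl : v6 = fun _ => c := funext H6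
    simp [pd_const]

end
end

section
/- For each x ∈ ℝ⁷ define linear functionals on ℝ⁷ by e¹ₓ(v) = v₁, e²ₓ(v) = v₂, e³ₓ(v) = v₃, e⁴ₓ(v) = v₄ − x₂v₁, e⁵ₓ(v) = v₅ − x₃v₁, e⁶ₓ(v) = v₆ + x₁v₄, e⁷ₓ(v) = v₇ + x₁v₅. For a ∈ ℝ⁷ let ℓₐ : ℝ⁷ → ℝ⁷ be the map ℓₐ(x) = m(a,x). Then each ℓₐ is smooth, and for every k ∈ {1,…,7}, all a, x ∈ ℝ⁷ and all v ∈ ℝ⁷, one has eᵏ at ℓₐ(x) applied to the Fréchet derivative Dℓₐ(x)(v) equals eᵏₓ(v). That is, the seven 1-forms e¹,…,e⁷ are invariant under all left translations ℓₐ. -/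
noncomputable section

/-- The coframe of 1-forms `e¹, …, e⁷` at the point `x`, applied to the vector `v`:
`e¹ₓ(v) = v₁`, `e²ₓ(v) = v₂`, `e³ₓ(v) = v₃`, `e⁴ₓ(v) = v₄ − x₂v₁`, `e⁵ₓ(v) = v₅ − x₃v₁`,
`e⁶ₓ(v) = v₆ + x₁v₄`, `e⁷ₓ(v) = v₇ + x₁v₅`. -/
def eForm (k : Fin 7) (x v : Fin 7 → ℝ) : ℝ :=
  ![v 0, v 1, v 2, v 3 - x 1 * v 0, v 4 - x 2 * v 0, v 5 + x 0 * v 3, v 6 + x 0 * v 4] k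

theorem m_smooth (a : Fin 7 → ℝ) : ContDiff ℝ (⊤ : ℕ∞) (m a) := by
  rw [contDiff_pi]
  intro i
  fin_cases i <;> simp [m] <;> fun_prop

theorem m_fderiv (a x v : Fin 7 → ℝ) : fderiv ℝ (m a) x v =
    ![v 0, v 1, v 2, v 3 + a 1 * v 0, v 4 + a 2 * v 0,
      v 5 - a 1 * x 0 * v 0 - a 0 * v 3 - a 0 * a 1 * v 0,
      v 6 - a 2 * x 0 * v 0 - a 0 * v 4 - a 0 * a 2 * v 0] := by
  have hd : DifferentiableAt ℝ (m a) x := (m_smooth a).differentiable (by simp) x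
  have h1 : HasDerivAt (fun t : ℝ => m a (x + t • v)) (fderiv ℝ (m a) x v) 0 :=
    hd.hasFDerivAt.hasLineDerivAt v
  refine h1.unique ?_
  have hc : ∀ i, HasDerivAt (fun t : ℝ => x i + t * v i) (v i) 0 := fun i => by
    simpa using ((hasDerivAt_id (0 : ℝ)).mul_const (v i)).const_add (x i)
  have hq : ∀ b c d : ℝ, ∀ i j : Fin 7, HasDerivAt (fun t : ℝ => (x i + t * v i)
      - (1/2) * b * (x 0 + t * v 0) ^ 2 - c * (x j + t * v j) - c * b * (x 0 + t * v 0) + d)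
      (v i - b * x 0 * v 0 - c * v j - c * b * v 0) 0 := fun b c d i j => by
    refine HasDerivAt.congr_deriv (((((hc i).sub (((hc 0).pow 2).const_mul ((1/2) * b))).sub
      ((hc j).const_mul c)).sub ((hc 0).const_mul (c * b))).add_const d) ?_
    norm_num
    ring
  rw [hasDerivAt_pi]
  intro i
  fin_cases i
  · exact (hc 0).add_const (a 0)
  · exact (hc 1).add_const (a 1)
  · exact (hc 2).add_const (a 2)
  · exact ((hc 3).add ((hc 0).const_mul (a 1))).add_const (a 3)
  · exact ((hc 4).add ((hc 0).const_mul (a 2))).add_const (a 4)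
  · exact hq (a 1) (a 0) (a 5) 5 3
  · exact hq (a 2) (a 0) (a 6) 6 4

/-- Each left translation `ℓₐ = m a` is smooth, and the seven 1-forms `e¹, …, e⁷` are
invariant under all left translations: `eᵏ` at `ℓₐ(x)` applied to the Fréchet derivative
`Dℓₐ(x)(v)` equals `eᵏₓ(v)`. -/
theorem stmt_14 :
    (∀ a : Fin 7 → ℝ, ContDiff ℝ (⊤ : ℕ∞) (m a)) ∧
    (∀ (k : Fin 7) (a x v : Fin 7 → ℝ),
      eForm k (m a x) (fderiv ℝ (m a) x v) = eForm k x v) := by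
  refine ⟨m_smooth, fun k a x v => ?_⟩
  rw [m_fderiv]
  fin_cases k <;> simp [eForm, m] <;> ring

end
end

section
/- For t ∈ ℝ and r > 0 set f(t,r) = (r⁴+t⁴)^{1/2} + 2t² log r − t² log((r⁴+t⁴)^{1/2} + t²) and h(t,r) = t²·((r⁴+t⁴)^{1/2} + r²)⁻¹ + 2 log r − log((r⁴+t⁴)^{1/2} + t²). Then f(t,r) − r² = t²·h(t,r) for all t ∈ ℝ and r > 0, and h is infinitely differentiable (C^∞) on the open set {(t,r) ∈ ℝ² : r > 0}. -/
noncomputable section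

open Real

/-- The Eguchi–Hanson Kähler potential
`f(t,r) = (r⁴+t⁴)^{1/2} + 2t² log r − t² log((r⁴+t⁴)^{1/2} + t²)`. -/
def f (t r : ℝ) : ℝ :=
  Real.sqrt (r ^ 4 + t ^ 4) + 2 * t ^ 2 * Real.log r
    - t ^ 2 * Real.log (Real.sqrt (r ^ 4 + t ^ 4) + t ^ 2)

/-- `h(t,r) = t²·((r⁴+t⁴)^{1/2} + r²)⁻¹ + 2 log r − log((r⁴+t⁴)^{1/2} + t²)`. -/
def h (t r : ℝ) : ℝ :=
  t ^ 2 * (Real.sqrt (r ^ 4 + t ^ 4) + r ^ 2)⁻¹ + 2 * Real.log r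
    - Real.log (Real.sqrt (r ^ 4 + t ^ 4) + t ^ 2)

/-- `f(t,r) − r² = t²·h(t,r)` for all `t ∈ ℝ` and `r > 0`, and `h` is `C^∞` on the
open set `{(t,r) : r > 0}`. -/
theorem stmt_16 :
    (∀ t r : ℝ, 0 < r → f t r - r ^ 2 = t ^ 2 * h t r) ∧
    ContDiffOn ℝ (⊤ : ℕ∞) (fun p : ℝ × ℝ => h p.1 p.2) {p : ℝ × ℝ | 0 < p.2} := by
  constructor
  · intro t r hr
    have hpos : 0 < r ^ 4 + t ^ 4 := by positivity
    have hs := Real.sq_sqrt hpos.le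
    have hne : Real.sqrt (r ^ 4 + t ^ 4) + r ^ 2 ≠ 0 := by positivity
    have key : Real.sqrt (r ^ 4 + t ^ 4) - r ^ 2
        = t ^ 4 * (Real.sqrt (r ^ 4 + t ^ 4) + r ^ 2)⁻¹ := by
      rw [eq_mul_inv_iff_mul_eq₀ hne]
      linear_combination hs
    unfold f h
    linear_combination key
  · intro p hp
    have hr : 0 < p.2 := hp
    have hpos : p.2 ^ 4 + p.1 ^ 4 ≠ 0 := by positivity
    have h1 : Real.sqrt (p.2 ^ 4 + p.1 ^ 4) + p.2 ^ 2 ≠ 0 := by positivity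
    have h2 : Real.sqrt (p.2 ^ 4 + p.1 ^ 4) + p.1 ^ 2 ≠ 0 := by positivity
    have ha : ContDiffAt ℝ (⊤ : ℕ∞) (fun p : ℝ × ℝ => p.1) p := contDiffAt_fst
    have hb : ContDiffAt ℝ (⊤ : ℕ∞) (fun p : ℝ × ℝ => p.2) p := contDiffAt_snd
    have hS : ContDiffAt ℝ (⊤ : ℕ∞)
        (fun p : ℝ × ℝ => Real.sqrt (p.2 ^ 4 + p.1 ^ 4)) p :=
      ((hb.pow 4).add (ha.pow 4)).sqrt hpos
    unfold h
    exact ((((ha.pow 2).mul ((hS.add (hb.pow 2)).inv h1)).add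
      (contDiffAt_const.mul (hb.log hr.ne'))).sub
      ((hS.add (ha.pow 2)).log h2)).contDiffWithinAt

end
end
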